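/- arXiv:2411.14447 — 4 statements merged into one kernel-verified Lean document; each statement's English description precedes it below -/
import Mathlib

section
/- Let f : ℕ → ℝ satisfy |f(n)| ≤ 1 for all n, suppose the series ∑_{n=1}^∞ f(n)·n^{-1/2-t'} converges for every t' > 0, and define F(t) = ∫_1^∞ S_x · x^{-1-t} dx for t > 0. If there is X₀ ≥ 1 such that S_x ≥ 0 for all x ≥ X₀, then F(t) ≥ F(2t) − 8·√X₀ for every t > 0. -/
open MeasureTheory Filter Finset Topology

/-- The partial sums `S_x = ∑_{n ≤ x} f(n) / √n`. -/
noncomputable def S (f : ℕ → ℝ) (x : ℝ) : ℝ :=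
  ∑ n ∈ Finset.Icc 1 ⌊x⌋₊, f n / Real.sqrt n

/-!
For `x ≥ 1` and `0 ≤ s ≤ t` the kernels satisfy `0 ≤ x ^ (-1 - s) - x ^ (-1 - t) ≤ x⁻¹`. Hence
passing from `s` to `t` can only decrease the contribution of `x > X₀`, where `S f x ≥ 0`, while on
`[1, X₀]` the bound `|S f x| ≤ 2 √x` limits the increase to `∫ 2 x ^ (-1/2) = 4 (√X₀ - 1)`.
Integrability comes from the Dirichlet series: partial summation turns boundedness of its partial
sums at the exponent `1/2 + r` into `S f x = O(x ^ r)`.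
-/

lemma norm_sum_Icc_smul_le_of_monotone {E : Type*} [NormedAddCommGroup E] [NormedSpace ℝ E]
    {w : ℕ → ℝ} {a : ℕ → E} {B : ℝ} (hw : Monotone w) (hw₀ : 0 ≤ w 0)
    (hB : ∀ N, ‖∑ n ∈ Finset.Icc 1 N, a n‖ ≤ B) (N : ℕ) :
    ‖∑ n ∈ Finset.Icc 1 N, w n • a n‖ ≤ 2 * B * w N := by
  have hB₀ : 0 ≤ B := (norm_nonneg _).trans (hB 0)
  have by_parts (N : ℕ) : ∑ n ∈ Finset.Icc 1 N, w n • a n =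
      w N • ∑ n ∈ Finset.Icc 1 N, a n -
        ∑ k ∈ Finset.range N, (w (k + 1) - w k) • ∑ n ∈ Finset.Icc 1 k, a n := by
    induction N with
    | zero => simp
    | succ N ih =>
      rw [Finset.sum_Icc_succ_top (by lia), Finset.sum_Icc_succ_top (by lia),
        Finset.sum_range_succ, ih]
      module
  have increments : ‖∑ k ∈ Finset.range N, (w (k + 1) - w k) • ∑ n ∈ Finset.Icc 1 k, a n‖ ≤
      (w N - w 0) * B := by
    rw [← Finset.sum_range_sub, Finset.sum_mul]
    refine norm_sum_le_of_le _ fun k _ => ?_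
    rw [norm_smul, Real.norm_of_nonneg (sub_nonneg.2 (hw k.le_succ))]
    exact mul_le_mul_of_nonneg_left (hB k) (sub_nonneg.2 (hw k.le_succ))
  have last : ‖w N • ∑ n ∈ Finset.Icc 1 N, a n‖ ≤ w N * B := by
    rw [norm_smul, Real.norm_of_nonneg (hw₀.trans (hw N.zero_le))]
    exact mul_le_mul_of_nonneg_left (hB N) (hw₀.trans (hw N.zero_le))
  calc ‖∑ n ∈ Finset.Icc 1 N, w n • a n‖ ≤ w N * B + (w N - w 0) * B := by
        rw [by_parts]
        exact (norm_sub_le _ _).trans (add_le_add last increments)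
    _ ≤ 2 * B * w N := by linarith [mul_nonneg hw₀ hB₀]

lemma inv_sqrt_add_one_le {x : ℝ} (hx : 0 ≤ x) : (√(x + 1))⁻¹ ≤ 2 * (√(x + 1) - √x) := by
  rw [inv_le_iff_one_le_mul₀ (Real.sqrt_pos.2 (by positivity))]
  linarith [sq_nonneg (√(x + 1) - √x), Real.sq_sqrt hx, Real.sq_sqrt (add_nonneg hx zero_le_one)]

lemma sum_Icc_inv_sqrt_le (N : ℕ) : ∑ n ∈ Finset.Icc 1 N, (√(n : ℝ))⁻¹ ≤ 2 * √N := by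
  induction N with
  | zero => simp
  | succ N ih =>
    rw [Finset.sum_Icc_succ_top (by lia)]
    push_cast
    linarith [inv_sqrt_add_one_le (N.cast_nonneg : (0 : ℝ) ≤ N)]

lemma rpow_neg_one_sub_sub_le_inv {s t x : ℝ} (hs : 0 ≤ s) (hx : 1 ≤ x) :
    x ^ (-1 - s) - x ^ (-1 - t) ≤ x⁻¹ := by
  have hx₀ : 0 < x := one_pos.trans_le hx
  calc x ^ (-1 - s) - x ^ (-1 - t) ≤ x ^ (-1 - s) := sub_le_self _ (Real.rpow_nonneg hx₀.le _)
    _ ≤ x ^ (-1 : ℝ) := Real.rpow_le_rpow_of_exponent_le hx (by linarith)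
    _ = x⁻¹ := Real.rpow_neg_one x

lemma mul_rpow_sub_mul_rpow_le {y K s t x : ℝ} (hs : 0 ≤ s) (hst : s ≤ t) (hx : 1 ≤ x)
    (hy : |y| ≤ K * √x) :
    y * x ^ (-1 - t) - y * x ^ (-1 - s) ≤ K * x ^ (-(1 / 2) : ℝ) := by
  have hx₀ : 0 < x := one_pos.trans_le hx
  have hkernel : 0 ≤ x ^ (-1 - s) - x ^ (-1 - t) :=
    sub_nonneg.2 (Real.rpow_le_rpow_of_exponent_le hx (by linarith))
  calc y * x ^ (-1 - t) - y * x ^ (-1 - s) = -y * (x ^ (-1 - s) - x ^ (-1 - t)) := by ring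
    _ ≤ |y| * (x ^ (-1 - s) - x ^ (-1 - t)) := mul_le_mul_of_nonneg_right (neg_le_abs y) hkernel
    _ ≤ K * √x * x⁻¹ :=
      mul_le_mul hy (rpow_neg_one_sub_sub_le_inv hs hx) hkernel ((abs_nonneg y).trans hy)
    _ = K * x ^ (-(1 / 2) : ℝ) := by
      rw [mul_assoc, ← div_eq_mul_inv, Real.sqrt_div_self, Real.rpow_neg hx₀.le,
        Real.sqrt_eq_rpow]

lemma integral_rpow_neg_half (a b : ℝ) :
    ∫ x in a..b, x ^ (-(1 / 2) : ℝ) = 2 * (√b - √a) := by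
  rw [integral_rpow (Or.inl (by norm_num)), show -(1 / 2) + 1 = (1 / 2 : ℝ) by norm_num,
    ← Real.sqrt_eq_rpow, ← Real.sqrt_eq_rpow]
  ring

lemma setIntegral_Ici_le_intervalIntegral {d : ℝ → ℝ} {a b : ℝ} (hab : a ≤ b)
    (hd : IntegrableOn d (Set.Ici a)) (hnonpos : ∀ x, b < x → d x ≤ 0) :
    ∫ x in Set.Ici a, d x ≤ ∫ x in a..b, d x := by
  have hIoi : IntegrableOn d (Set.Ioi a) := hd.mono_set Set.Ioi_subset_Ici_self
  have hsplit := intervalIntegral.integral_interval_add_Ioi hIoi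
    (hIoi.mono_set (Set.Ioi_subset_Ioi hab))
  have htail : ∫ x in Set.Ioi b, d x ≤ 0 := setIntegral_nonpos measurableSet_Ioi hnonpos
  rw [integral_Ici_eq_integral_Ioi]
  linarith

lemma integrableOn_mul_rpow_of_abs_le {g : ℝ → ℝ} {K r s : ℝ} (hg : Measurable g) (hrs : r < s)
    (hbound : ∀ x, 1 ≤ x → |g x| ≤ K * x ^ r) :
    IntegrableOn (fun x => g x * x ^ (-1 - s)) (Set.Ici 1) := by
  have hmajorant : IntegrableOn (fun x : ℝ => K * x ^ (r + (-1 - s))) (Set.Ici 1) :=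
    integrableOn_Ici_iff_integrableOn_Ioi (by finiteness) |>.2
      ((integrableOn_Ioi_rpow_of_lt (by linarith) one_pos).const_mul K)
  refine Integrable.mono' hmajorant (by fun_prop) ?_
  filter_upwards [ae_restrict_mem measurableSet_Ici] with x (hx : 1 ≤ x)
  have hx₀ : 0 < x := one_pos.trans_le hx
  rw [Real.norm_eq_abs, abs_mul, abs_of_pos (Real.rpow_pos_of_pos hx₀ _), Real.rpow_add hx₀,
    ← mul_assoc]
  exact mul_le_mul_of_nonneg_right (hbound x hx) (Real.rpow_nonneg hx₀.le _)

lemma setIntegral_mul_rpow_le_add_sqrt {g : ℝ → ℝ} {K s t X₀ : ℝ} (hs : 0 ≤ s) (hst : s ≤ t)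
    (hX₀ : 1 ≤ X₀) (hbound : ∀ x ∈ Set.Icc 1 X₀, |g x| ≤ K * √x)
    (hpos : ∀ x, X₀ ≤ x → 0 ≤ g x)
    (hints : IntegrableOn (fun x => g x * x ^ (-1 - s)) (Set.Ici 1))
    (hintt : IntegrableOn (fun x => g x * x ^ (-1 - t)) (Set.Ici 1)) :
    ∫ x in Set.Ici (1 : ℝ), g x * x ^ (-1 - t) ≤
      (∫ x in Set.Ici (1 : ℝ), g x * x ^ (-1 - s)) + 2 * K * (√X₀ - 1) := by
  have htail (x : ℝ) (hx : X₀ < x) : g x * x ^ (-1 - t) - g x * x ^ (-1 - s) ≤ 0 :=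
    sub_nonpos.2 (mul_le_mul_of_nonneg_left
      (Real.rpow_le_rpow_of_exponent_le (hX₀.trans hx.le) (by linarith)) (hpos x hx.le))
  have hint := hintt.sub hints
  rw [← sub_le_iff_le_add', ← integral_sub hintt hints]
  calc ∫ x in Set.Ici (1 : ℝ), (g x * x ^ (-1 - t) - g x * x ^ (-1 - s))
      ≤ ∫ x in (1 : ℝ)..X₀, (g x * x ^ (-1 - t) - g x * x ^ (-1 - s)) :=
        setIntegral_Ici_le_intervalIntegral hX₀ hint htail
    _ ≤ ∫ x in (1 : ℝ)..X₀, K * x ^ (-(1 / 2) : ℝ) := by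
        refine intervalIntegral.integral_mono_on hX₀ ?_ ?_
          fun x hx => mul_rpow_sub_mul_rpow_le hs hst hx.1 (hbound x hx)
        · exact (intervalIntegrable_iff_integrableOn_Icc_of_le hX₀).2
            (hint.mono_set Set.Icc_subset_Ici_self)
        · exact (intervalIntegral.intervalIntegrable_rpow' (by norm_num)).const_mul K
    _ = 2 * K * (√X₀ - 1) := by
        rw [intervalIntegral.integral_const_mul, integral_rpow_neg_half, Real.sqrt_one]
        ring

lemma measurable_S (f : ℕ → ℝ) : Measurable (S f) :=
  (measurable_from_nat (f := fun N : ℕ => ∑ n ∈ Finset.Icc 1 N, f n / √n)).comp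
    Nat.measurable_floor

lemma abs_S_le_sqrt {f : ℕ → ℝ} {C x : ℝ} (hf : ∀ n, |f n| ≤ C) (hx : 0 ≤ x) :
    |S f x| ≤ 2 * C * √x := by
  have hC : 0 ≤ C := (abs_nonneg _).trans (hf 0)
  calc |S f x| ≤ ∑ n ∈ Finset.Icc 1 ⌊x⌋₊, C * (√(n : ℝ))⁻¹ := by
        refine Finset.abs_sum_le_sum_abs _ _ |>.trans (Finset.sum_le_sum fun n _ => ?_)
        rw [abs_div, abs_of_nonneg (Real.sqrt_nonneg _), div_eq_mul_inv]
        exact mul_le_mul_of_nonneg_right (hf n) (by positivity)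
    _ ≤ C * (2 * √⌊x⌋₊) := by
        rw [← Finset.mul_sum]
        exact mul_le_mul_of_nonneg_left (sum_Icc_inv_sqrt_le _) hC
    _ ≤ C * (2 * √x) := by
        gcongr
        exact Nat.floor_le hx
    _ = 2 * C * √x := by ring

lemma abs_S_le_rpow {f : ℕ → ℝ} {B r x : ℝ} (hr : 0 ≤ r)
    (hB : ∀ N : ℕ, |∑ n ∈ Finset.Icc 1 N, f n * (n : ℝ) ^ (-(1 / 2 : ℝ) - r)| ≤ B)
    (hx : 0 ≤ x) : |S f x| ≤ 2 * B * x ^ r := by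
  have hB₀ : 0 ≤ B := (abs_nonneg _).trans (hB 0)
  have hw : Monotone fun n : ℕ => (n : ℝ) ^ r := fun m n hmn =>
    Real.rpow_le_rpow m.cast_nonneg (Nat.cast_le.2 hmn) hr
  have hS : S f x =
      ∑ n ∈ Finset.Icc 1 ⌊x⌋₊, (n : ℝ) ^ r • (f n * (n : ℝ) ^ (-(1 / 2 : ℝ) - r)) := by
    refine Finset.sum_congr rfl fun n hn => ?_
    have hn₀ : (0 : ℝ) < n := Nat.cast_pos.2 (Finset.mem_Icc.1 hn).1
    rw [smul_eq_mul, mul_left_comm, ← Real.rpow_add hn₀, add_sub_cancel, Real.rpow_neg hn₀.le,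
      ← Real.sqrt_eq_rpow, div_eq_mul_inv]
  calc |S f x| ≤ 2 * B * (⌊x⌋₊ : ℝ) ^ r := by
        rw [hS]
        exact norm_sum_Icc_smul_le_of_monotone
          (a := fun n : ℕ => f n * (n : ℝ) ^ (-(1 / 2 : ℝ) - r)) hw
          (Real.rpow_nonneg (Nat.cast_nonneg 0) r) hB _
    _ ≤ 2 * B * x ^ r := by
        gcongr
        exact Nat.floor_le hx

theorem F_ge_F_two_t_general {f : ℕ → ℝ} {C r s t X₀ : ℝ} (hf : ∀ n, |f n| ≤ C)
    (hr : 0 ≤ r) (hrs : r < s) (hst : s ≤ t)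
    (hbdd : Bornology.IsBounded (Set.range fun N : ℕ =>
      ∑ n ∈ Finset.Icc 1 N, f n * (n : ℝ) ^ (-(1 / 2 : ℝ) - r)))
    (hX₀ : 1 ≤ X₀) (hpos : ∀ x : ℝ, X₀ ≤ x → 0 ≤ S f x) :
    (∫ x in Set.Ici (1 : ℝ), S f x * x ^ (-1 - t)) - 4 * C * (√X₀ - 1) ≤
      ∫ x in Set.Ici (1 : ℝ), S f x * x ^ (-1 - s) := by
  obtain ⟨B, hB⟩ := hbdd.exists_norm_le
  have hgrowth (x : ℝ) (hx : 1 ≤ x) : |S f x| ≤ 2 * B * x ^ r :=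
    abs_S_le_rpow hr (fun N => hB _ (Set.mem_range_self N)) (zero_le_one.trans hx)
  have hint {u : ℝ} (hu : r < u) : IntegrableOn (fun x => S f x * x ^ (-1 - u)) (Set.Ici 1) :=
    integrableOn_mul_rpow_of_abs_le (measurable_S f) hu hgrowth
  linarith [setIntegral_mul_rpow_le_add_sqrt (hr.trans hrs.le) hst hX₀
    (fun x hx => abs_S_le_sqrt hf (zero_le_one.trans hx.1)) hpos (hint hrs)
    (hint (hrs.trans_le hst))]

/-- If `|f| ≤ 1`, the Dirichlet series `∑ f(n) n^{-1/2-t'}` converges for every `t' > 0`,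
`F(t) = ∫_1^∞ S_x x^{-1-t} dx`, and `S_x ≥ 0` for all `x ≥ X₀` (with `X₀ ≥ 1`), then
`F(t) ≥ F(2t) - 8 √X₀` for every `t > 0`. -/
theorem F_ge_F_two_t (f : ℕ → ℝ) (hf : ∀ n, |f n| ≤ 1)
    (hconv : ∀ t' : ℝ, 0 < t' → ∃ L : ℝ,
      Tendsto (fun N => ∑ n ∈ Finset.Icc 1 N, f n * (n : ℝ) ^ (-(1 / 2 : ℝ) - t'))
        atTop (𝓝 L))
    (F : ℝ → ℝ)
    (hF : ∀ t : ℝ, 0 < t → F t = ∫ x in Set.Ici (1 : ℝ), S f x * x ^ (-1 - t))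
    (X₀ : ℝ) (hX₀ : 1 ≤ X₀) (hpos : ∀ x : ℝ, X₀ ≤ x → 0 ≤ S f x) :
    ∀ t : ℝ, 0 < t → F (2 * t) - 8 * Real.sqrt X₀ ≤ F t := by
  intro t ht
  obtain ⟨L, hL⟩ := hconv (t / 2) (half_pos ht)
  rw [hF t ht, hF (2 * t) (by positivity)]
  linarith [F_ge_F_two_t_general hf (half_pos ht).le (half_lt_self ht) (by linarith : t ≤ 2 * t)
    (Metric.isBounded_range_of_tendsto _ hL) hX₀ hpos, Real.sqrt_nonneg X₀]
end

section
/- There exist real constants c₀ and C > 0 such that for all t ∈ (0, 1], |∑_p p^{-1-t} − log(1/t) − c₀| ≤ C·t, where the sum runs over all primes p. -/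
open Filter Topology

/-!
Taking logarithms in the Euler product gives `log ζ(s) = ∑_p p^{-s} + H(s)` for `s > 1`, where
`H(s) = ∑_p ∑_{k ≥ 2} p^{-ks} / k`. The series `H` converges for `s > 1/2` and is Lipschitz on every
`[a, ∞)` with `a > 1/2`, so `H(1 + t) = H(1) + O(t)`. Comparing `ζ(s)` with `∫₁^∞ x^{-s} dx` gives
`1 ≤ t ζ(1 + t) ≤ 1 + t`, so `log ζ(1 + t) = log (1 / t) + O(t)`. Hence `c₀ = -H(1)`.
-/

/-- The tail `∑_{k ≥ 2} x ^ k / k` of the Taylor series of `-log (1 - x)`, in closed form (for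
`|x| < 1`). At `x = p^{-s}` it is what the powers `p ^ k`, `k ≥ 2`, contribute to `log ζ(s)`. -/
noncomputable def negLogTail (x : ℝ) : ℝ := -Real.log (1 - x) - x

/-- The function `H(s) = ∑_p ∑_{k ≥ 2} p^{-ks} / k`, the contribution of the proper prime powers to
`log ζ(s)`. The sum over `p` converges for `s > 1/2`. -/
noncomputable def primePowerTail (s : ℝ) : ℝ := ∑' p : Nat.Primes, negLogTail ((p : ℝ) ^ (-s))

section NegLogTail

variable {x y : ℝ}

lemma negLogTail_sub_le (hx : x < 1) (hy : y < 1) :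
    negLogTail y - negLogTail x ≤ (y - x) * (y / (1 - y)) := by
  have hx' : 0 < 1 - x := sub_pos.2 hx
  have hy' : 0 < 1 - y := sub_pos.2 hy
  calc negLogTail y - negLogTail x = Real.log ((1 - x) / (1 - y)) - (y - x) := by
        rw [Real.log_div hx'.ne' hy'.ne', negLogTail, negLogTail]; ring
    _ ≤ (1 - x) / (1 - y) - 1 - (y - x) := by
        gcongr; exact Real.log_le_sub_one_of_pos (div_pos hx' hy')
    _ = (y - x) * (y / (1 - y)) := by field

lemma negLogTail_nonneg (hx : x < 1) : 0 ≤ negLogTail x := by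
  have := Real.log_le_sub_one_of_pos (sub_pos.2 hx)
  rw [negLogTail]
  linarith

lemma negLogTail_le_sq_div (hx : x < 1) : negLogTail x ≤ x ^ 2 / (1 - x) := by
  simpa [negLogTail, sq, mul_div_assoc] using negLogTail_sub_le zero_lt_one hx

end NegLogTail

section Rpow

lemma rpow_neg_sub_rpow_neg_le {q : ℝ} (hq : 0 < q) (s t : ℝ) :
    q ^ (-s) - q ^ (-t) ≤ (t - s) * (Real.log q * q ^ (-s)) := by
  have hfactor : q ^ (-t) = q ^ (-s) * Real.exp (Real.log q * (s - t)) := by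
    rw [← Real.rpow_def_of_pos hq, ← Real.rpow_add hq]; congr 1; ring
  have hexp : q ^ (-s) * (Real.log q * (s - t) + 1) ≤ q ^ (-t) := by
    rw [hfactor]; gcongr; exact Real.add_one_le_exp _
  linarith

lemma summable_log_mul_natCast_rpow {r : ℝ} (hr : r < -1) :
    Summable fun n : ℕ ↦ Real.log n * (n : ℝ) ^ r := by
  obtain ⟨u, hru, hu⟩ := exists_between hr
  have hlog : (fun x : ℝ ↦ Real.log x * x ^ r) =O[atTop] fun x ↦ x ^ u := by
    refine ((isLittleO_log_rpow_atTop (sub_pos.2 hru)).isBigO.mul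
      (Asymptotics.isBigO_refl (fun x : ℝ ↦ x ^ r) atTop)).congr' .rfl ?_
    filter_upwards [eventually_gt_atTop 0] with x hx
    rw [← Real.rpow_add hx, sub_add_cancel]
  exact summable_of_isBigO_nat (Real.summable_nat_rpow.2 hu)
    (hlog.comp_tendsto tendsto_natCast_atTop_atTop)

variable {b q a s t : ℝ}

lemma rpow_neg_lt_one (hq : 1 < q) (hs : 0 < s) : q ^ (-s) < 1 :=
  Real.rpow_lt_one_of_one_lt_of_neg hq (neg_neg_of_pos hs)

lemma negLogTail_rpow_neg_le (hb : 1 < b) (hbq : b ≤ q) (hs : 0 < s) :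
    negLogTail (q ^ (-s)) ≤ q ^ (-(2 * s)) / (1 - b ^ (-s)) := by
  have hq : 1 < q := hb.trans_le hbq
  have hbs : b ^ (-s) < 1 := rpow_neg_lt_one hb hs
  calc negLogTail (q ^ (-s)) ≤ (q ^ (-s)) ^ 2 / (1 - q ^ (-s)) :=
        negLogTail_le_sq_div (rpow_neg_lt_one hq hs)
    _ ≤ (q ^ (-s)) ^ 2 / (1 - b ^ (-s)) := by
        gcongr ?_ / (1 - ?_)
        · linarith
        · exact Real.rpow_le_rpow_of_nonpos (by linarith) hbq (by linarith)
    _ = q ^ (-(2 * s)) / (1 - b ^ (-s)) := by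
        rw [← Real.rpow_mul_natCast (by linarith)]; congr 2; push_cast; ring

lemma negLogTail_rpow_neg_sub_le (hb : 1 < b) (hbq : b ≤ q) (ha : 0 < a) (has : a ≤ s)
    (ht : 0 < t) :
    negLogTail (q ^ (-s)) - negLogTail (q ^ (-t)) ≤
      Real.log q * q ^ (-(2 * a)) / (1 - b ^ (-a)) * |s - t| := by
  have hq : 1 < q := hb.trans_le hbq
  have hq₀ : 0 < q := one_pos.trans hq
  have hlog : 0 ≤ Real.log q := Real.log_nonneg hq.le
  have hba : b ^ (-a) < 1 := rpow_neg_lt_one hb ha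
  have hqs : q ^ (-s) < 1 := rpow_neg_lt_one hq (ha.trans_le has)
  have hsa : q ^ (-s) ≤ q ^ (-a) := Real.rpow_le_rpow_of_exponent_le hq.le (by linarith)
  have hqa : q ^ (-a) ≤ b ^ (-a) := Real.rpow_le_rpow_of_nonpos (by linarith) hbq (by linarith)
  calc negLogTail (q ^ (-s)) - negLogTail (q ^ (-t))
      ≤ (q ^ (-s) - q ^ (-t)) * (q ^ (-s) / (1 - q ^ (-s))) :=
        negLogTail_sub_le (rpow_neg_lt_one hq ht) hqs
    _ ≤ |s - t| * (Real.log q * q ^ (-s)) * (q ^ (-s) / (1 - q ^ (-s))) := by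
        have := sub_pos.2 hqs
        gcongr
        refine (rpow_neg_sub_rpow_neg_le hq₀ s t).trans ?_
        gcongr
        rw [abs_sub_comm]
        exact le_abs_self _
    _ ≤ |s - t| * (Real.log q * q ^ (-a)) * (q ^ (-a) / (1 - b ^ (-a))) := by
        have := sub_pos.2 hba
        gcongr
        exact hsa.trans hqa
    _ = Real.log q * q ^ (-(2 * a)) / (1 - b ^ (-a)) * |s - t| := by
        rw [two_mul, neg_add, Real.rpow_add hq₀]; ring

end Rpow

section PrimePowerTail

lemma two_le_primes_cast (p : Nat.Primes) : (2 : ℝ) ≤ p := mod_cast p.2.two_le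

lemma one_lt_primes_cast (p : Nat.Primes) : (1 : ℝ) < p := mod_cast p.2.one_lt

lemma summable_negLogTail_primes_rpow_neg {s : ℝ} (hs : 1 / 2 < s) :
    Summable fun p : Nat.Primes ↦ negLogTail ((p : ℝ) ^ (-s)) := by
  have hs₀ : 0 < s := by linarith
  refine .of_nonneg_of_le
    (fun p ↦ negLogTail_nonneg (rpow_neg_lt_one (one_lt_primes_cast p) hs₀))
    (fun p ↦ negLogTail_rpow_neg_le one_lt_two (two_le_primes_cast p) hs₀) ?_
  exact (Nat.Primes.summable_rpow.2 (by linarith)).div_const _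

lemma exists_lipschitzOnWith_primePowerTail {a : ℝ} (ha : 1 / 2 < a) :
    ∃ K, LipschitzOnWith K primePowerTail (Set.Ici a) := by
  have ha₀ : 0 < a := by linarith
  let c (p : Nat.Primes) : ℝ := Real.log p * (p : ℝ) ^ (-(2 * a)) / (1 - 2 ^ (-a))
  have hc : Summable c :=
    ((summable_log_mul_natCast_rpow (by linarith)).subtype {p | p.Prime}).div_const _
  refine ⟨(∑' p, c p).toNNReal, .of_le_add_mul' _ fun s hs t ht ↦ ?_⟩
  have hs' := summable_negLogTail_primes_rpow_neg (ha.trans_le hs)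
  have ht' := summable_negLogTail_primes_rpow_neg (ha.trans_le ht)
  calc primePowerTail s
      ≤ ∑' p : Nat.Primes, (negLogTail ((p : ℝ) ^ (-t)) + c p * dist s t) :=
        hs'.tsum_le_tsum (fun p ↦ sub_le_iff_le_add'.1 <|
          negLogTail_rpow_neg_sub_le one_lt_two (two_le_primes_cast p) ha₀ hs (ha₀.trans_le ht))
          (ht'.add (hc.mul_right _))
    _ = primePowerTail t + (∑' p, c p) * dist s t := by
        rw [ht'.tsum_add (hc.mul_right _), tsum_mul_right, primePowerTail]

end PrimePowerTail

section RiemannZeta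

variable {s : ℝ}

lemma hasSum_riemannZeta_re (hs : 1 < s) :
    HasSum (fun n : ℕ ↦ ((n + 1 : ℕ) : ℝ) ^ (-s)) (riemannZeta s).re := by
  have hsum : Summable fun n : ℕ ↦ ((n + 1 : ℕ) : ℝ) ^ (-s) :=
    (summable_nat_add_iff 1).2 (Real.summable_nat_rpow.2 (neg_lt_neg hs))
  convert hsum.hasSum
  rw [zeta_eq_tsum_one_div_nat_add_one_cpow (by simpa using hs), ← Complex.ofReal_re (∑' _, _),
    Complex.ofReal_tsum]
  congr! 3 with n
  rw [Complex.ofReal_cpow (by positivity), Complex.ofReal_neg, Complex.cpow_neg, one_div]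
  norm_cast

lemma antitoneOn_rpow_neg_Ici_one (hs : 0 ≤ s) :
    AntitoneOn (fun x : ℝ ↦ x ^ (-s)) (Set.Ici 1) :=
  (Real.antitoneOn_rpow_Ioi_of_exponent_nonpos (neg_nonpos.2 hs)).mono
    (Set.Ici_subset_Ioi.2 one_pos)

lemma integral_Ioi_one_rpow_neg (hs : 1 < s) : ∫ x in Set.Ioi (1 : ℝ), x ^ (-s) = (s - 1)⁻¹ := by
  rw [integral_Ioi_rpow_of_lt (neg_lt_neg hs) one_pos, Real.one_rpow, neg_add_eq_sub,
    ← neg_sub, neg_div_neg_eq, one_div]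

lemma inv_sub_one_le_riemannZeta_re (hs : 1 < s) : (s - 1)⁻¹ ≤ (riemannZeta s).re := by
  have hcompare := AntitoneOn.integral_le_tsum_comp_add (f := fun x ↦ x ^ (-s)) 1
    (by simpa using antitoneOn_rpow_neg_Ici_one (zero_le_one.trans hs.le))
    (Real.summable_nat_rpow.2 (neg_lt_neg hs))
    fun x hx ↦ Real.rpow_nonneg ((Nat.cast_nonneg 1).trans (le_of_lt hx)) _
  rwa [Nat.cast_one, integral_Ioi_one_rpow_neg hs, (hasSum_riemannZeta_re hs).tsum_eq] at hcompare

lemma riemannZeta_re_le_one_add_inv_sub_one (hs : 1 < s) :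
    (riemannZeta s).re ≤ 1 + (s - 1)⁻¹ := by
  have hζ := hasSum_riemannZeta_re hs
  have hcompare := AntitoneOn.tsum_comp_add_le_integral (f := fun x ↦ x ^ (-s)) 1
    (by simpa using antitoneOn_rpow_neg_Ici_one (zero_le_one.trans hs.le))
    (by simpa using integrableOn_Ioi_rpow_of_lt (neg_lt_neg hs) one_pos)
    fun x hx ↦ Real.rpow_nonneg ((Nat.cast_nonneg 1).trans (le_of_lt hx)) _
  rw [Nat.cast_one, integral_Ioi_one_rpow_neg hs] at hcompare
  rw [← hζ.tsum_eq, hζ.summable.tsum_eq_zero_add]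
  simpa using hcompare

lemma abs_log_riemannZeta_re_add_log_sub_one_le (hs : 1 < s) :
    |Real.log (riemannZeta s).re + Real.log (s - 1)| ≤ s - 1 := by
  have hs' : 0 < s - 1 := sub_pos.2 hs
  have hlower : 1 ≤ (riemannZeta s).re * (s - 1) :=
    (inv_le_iff_one_le_mul₀ hs').1 (inv_sub_one_le_riemannZeta_re hs)
  have hupper : (riemannZeta s).re * (s - 1) ≤ s := by
    have := mul_le_mul_of_nonneg_right (riemannZeta_re_le_one_add_inv_sub_one hs) hs'.le
    rwa [add_mul, inv_mul_cancel₀ hs'.ne', one_mul, sub_add_cancel] at this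
  rw [← Real.log_mul (riemannZeta_re_pos_of_one_lt hs).ne' hs'.ne',
    abs_of_nonneg (Real.log_nonneg hlower)]
  exact (Real.log_le_sub_one_of_pos (by linarith)).trans (by linarith)

lemma log_riemannZeta_re_eq_tsum_primes_add (hs : 1 < s) :
    Real.log (riemannZeta s).re = ∑' p : Nat.Primes, (p : ℝ) ^ (-s) + primePowerTail s := by
  have hfactor (p : Nat.Primes) : -Complex.log (1 - (p : ℂ) ^ (-(s : ℂ))) =
      (((p : ℝ) ^ (-s) + negLogTail ((p : ℝ) ^ (-s)) : ℝ) : ℂ) := by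
    have hp : (p : ℝ) ^ (-s) < 1 := rpow_neg_lt_one (one_lt_primes_cast p) (by linarith)
    have hcast : (p : ℂ) ^ (-(s : ℂ)) = ((p : ℝ) ^ (-s) : ℝ) := by
      rw [Complex.ofReal_cpow (by positivity)]; norm_cast
    rw [hcast, negLogTail, add_sub_cancel, Complex.ofReal_neg, Complex.ofReal_log (by linarith)]
    norm_cast
  rw [← riemannZeta_eulerProduct_exp_log (by simpa using hs), tsum_congr hfactor,
    ← Complex.ofReal_tsum, Complex.exp_ofReal_re, Real.log_exp, primePowerTail]
  exact (Nat.Primes.summable_rpow.2 (by linarith)).tsum_add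
    (summable_negLogTail_primes_rpow_neg (by linarith))

end RiemannZeta

theorem prime_sum_asymptotic_general :
    ∃ c₀ C : ℝ, 0 < C ∧ ∀ t : ℝ, 0 < t →
      |(∑' p : Nat.Primes, ((p : ℕ) : ℝ) ^ (-1 - t)) - Real.log (1 / t) - c₀| ≤ C * t := by
  obtain ⟨K, hK⟩ := exists_lipschitzOnWith_primePowerTail (a := 1) (by norm_num)
  refine ⟨-primePowerTail 1, 1 + K, by positivity, fun t ht ↦ ?_⟩
  have hzeta : |Real.log (riemannZeta (1 + t : ℝ)).re + Real.log t| ≤ t := by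
    simpa using abs_log_riemannZeta_re_add_log_sub_one_le (lt_add_of_pos_right 1 ht)
  have htail : |primePowerTail 1 - primePowerTail (1 + t)| ≤ K * t := by
    simpa [Real.dist_eq, abs_of_pos ht] using
      hK.dist_le_mul 1 Set.self_mem_Ici (1 + t) (Set.mem_Ici.2 (by linarith))
  calc _ = |(Real.log (riemannZeta (1 + t : ℝ)).re + Real.log t) +
          (primePowerTail 1 - primePowerTail (1 + t))| := by
        rw [log_riemannZeta_re_eq_tsum_primes_add (by linarith), one_div, Real.log_inv, neg_add']
        congr 1; ring
    _ ≤ t + K * t := (abs_add_le _ _).trans (add_le_add hzeta htail)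
    _ = (1 + K) * t := by ring

/-- There are constants `c₀` and `C > 0` with
`|∑_p p^{-1-t} - log(1/t) - c₀| ≤ C t` for all `t ∈ (0, 1]`. -/
theorem prime_sum_asymptotic :
    ∃ c₀ C : ℝ, 0 < C ∧ ∀ t : ℝ, 0 < t → t ≤ 1 →
      |(∑' p : Nat.Primes, ((p : ℕ) : ℝ) ^ (-1 - t)) - Real.log (1 / t) - c₀| ≤ C * t := by
  obtain ⟨c₀, C, hC, h⟩ := prime_sum_asymptotic_general
  exact ⟨c₀, C, hC, fun t ht _ ↦ h t ht⟩
end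

section
/- There exists a constant C > 0 such that for all reals t₁, t₂ with 0 < t₂ < t₁ ≤ 1/4, |∑_p (p^{-1/2-t₁} − p^{-1/2-2t₁})(p^{-1/2-t₂} − p^{-1/2-2t₂}) − (log((t₁+2t₂)/(t₁+t₂)) + log((2t₁+t₂)/(2t₁+2t₂)))| ≤ C·t₁, where the sum runs over all primes. -/
open Filter Topology

open scoped NNReal

/-!
Let `P(s) = ∑_p p^{-s}`. Expanding the product of the two differences turns the sum into the second
difference of `P` with nodes `1 + t₁ + t₂`, `1 + t₁ + 2t₂`, `1 + 2t₁ + t₂`, `1 + 2t₁ + 2t₂`, and the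
two logarithms are the same second difference of `-log (s - 1)`. So it suffices that
`P(s) + log (s - 1)` is Lipschitz on `(1, ∞)`, pairing the nodes that differ by `t₁`. By the Euler
product it equals `log ((s - 1) ζ(s)) - ∑_p ∑_{k ≥ 2} p^{-ks}/k`. The first term is smooth up to
`s = 1` because `(s - 1) ζ(s)` is entire and positive there, and the second is Lipschitz because
`∑_p p^{-2} log p` converges. Away from `s = 1` both `P` and `log (s - 1)` are Lipschitz already.
-/

theorem lipschitzOnWith_tsum {ι α E : Type*} [PseudoMetricSpace α] [NormedAddCommGroup E]
    {f : ι → α → E} {K : ι → ℝ≥0} {S : Set α} (hK : Summable K)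
    (hf : ∀ i, LipschitzOnWith (K i) (f i) S) (hS : ∀ x ∈ S, Summable fun i ↦ f i x) :
    LipschitzOnWith (∑' i, K i) (fun x ↦ ∑' i, f i x) S := by
  refine LipschitzOnWith.of_dist_le_mul fun x hx y hy ↦ ?_
  rw [dist_eq_norm, ← (hS x hx).tsum_sub (hS y hy)]
  refine tsum_of_norm_bounded ((NNReal.hasSum_coe.2 hK.hasSum).mul_right _) fun i ↦ ?_
  simpa only [dist_eq_norm] using (hf i).dist_le_mul x hx y hy

theorem lipschitzOnWith_of_inter_Iic_of_inter_Ici {α : Type*} [PseudoMetricSpace α] {f : ℝ → α}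
    {K L : ℝ≥0} {S : Set ℝ} {b : ℝ} (hb : b ∈ S) (hK : LipschitzOnWith K f (S ∩ Set.Iic b))
    (hL : LipschitzOnWith L f (S ∩ Set.Ici b)) : LipschitzOnWith (max K L) f S := by
  have hK' := (hK.weaken (le_max_left K L)).dist_le_mul
  have hL' := (hL.weaken (le_max_right K L)).dist_le_mul
  refine LipschitzOnWith.of_dist_le_mul fun x hx y hy ↦ ?_
  wlog hxy : x ≤ y generalizing x y
  · simpa only [dist_comm] using this y hy x hx (le_of_not_ge hxy)
  rcases le_total y b with hyb | hby
  · exact hK' x ⟨hx, hxy.trans hyb⟩ y ⟨hy, hyb⟩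
  rcases le_total b x with hbx | hxb
  · exact hL' x ⟨hx, hbx⟩ y ⟨hy, hby⟩
  calc dist (f x) (f y) ≤ dist (f x) (f b) + dist (f b) (f y) := dist_triangle _ _ _
    _ ≤ max K L * dist x b + max K L * dist b y :=
      add_le_add (hK' x ⟨hx, hxb⟩ b ⟨hb, Set.self_mem_Iic⟩)
        (hL' b ⟨hb, Set.self_mem_Ici⟩ y ⟨hy, hby⟩)
    _ = max K L * dist x y := by
      rw [dist_comm x b, dist_comm b y, dist_comm x y, Real.dist_eq, Real.dist_eq, Real.dist_eq,
        abs_of_nonneg (sub_nonneg.2 hxb), abs_of_nonneg (sub_nonneg.2 hby),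
        abs_of_nonneg (sub_nonneg.2 hxy)]
      ring

theorem lipschitzOnWith_rpow_neg {x : ℝ} (hx : 1 ≤ x) (σ : ℝ) :
    LipschitzOnWith (x ^ (-σ) * Real.log x).toNNReal (fun s ↦ x ^ (-s)) (Set.Ici σ) := by
  have hx₀ : 0 < x := by linarith
  refine (convex_Ici σ).lipschitzOnWith_of_nnnorm_hasDerivWithin_le
    (f' := fun s ↦ -(x ^ (-s) * Real.log x)) (fun s _ ↦ ?_) fun s hs ↦ ?_
  · simpa [Function.comp_def] using ((Real.hasStrictDerivAt_const_rpow hx₀ (-s)).hasDerivAt.comp s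
      (hasDerivAt_neg s)).hasDerivWithinAt
  · have hlog := Real.log_nonneg hx
    rw [← NNReal.coe_le_coe, coe_nnnorm, norm_neg, Real.norm_of_nonneg (by positivity),
      Real.coe_toNNReal _ (by positivity)]
    gcongr
    exact hs

theorem lipschitzOnWith_neg_log_one_sub_sub_self {c : ℝ} (hc : c < 1) :
    LipschitzOnWith (c / (1 - c)).toNNReal (fun u ↦ -Real.log (1 - u) - u) (Set.Icc 0 c) := by
  refine (convex_Icc 0 c).lipschitzOnWith_of_nnnorm_hasDerivWithin_le
    (f' := fun u ↦ u / (1 - u)) (fun u hu ↦ ?_) fun u hu ↦ ?_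
  · have hu₁ : 1 - u ≠ 0 := by linarith [hu.2]
    have := ((((hasDerivAt_id u).const_sub 1).log hu₁).neg.sub (hasDerivAt_id u)).hasDerivWithinAt
      (s := Set.Icc 0 c)
    refine this.congr_deriv ?_
    simp only [id]
    field_simp
    ring
  · have hu₁ : 0 < 1 - u := by linarith [hu.2]
    have hc₁ : 0 < 1 - c := by linarith
    have hc₀ : 0 ≤ c := hu.1.trans hu.2
    rw [← NNReal.coe_le_coe, coe_nnnorm, Real.norm_of_nonneg (div_nonneg hu.1 hu₁.le),
      Real.coe_toNNReal _ (div_nonneg hc₀ hc₁.le)]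
    gcongr <;> exact hu.2

theorem lipschitzOnWith_log_sub {a b : ℝ} (hab : a < b) :
    LipschitzOnWith (b - a)⁻¹.toNNReal (fun s ↦ Real.log (s - a)) (Set.Ici b) := by
  have hb : 0 < b - a := sub_pos.2 hab
  refine (convex_Ici b).lipschitzOnWith_of_nnnorm_hasDerivWithin_le
    (f' := fun s ↦ (s - a)⁻¹) (fun s hs ↦ ?_) fun s hs ↦ ?_
  · have hs' : s - a ≠ 0 := by linarith [Set.mem_Ici.1 hs]
    simpa using (((hasDerivAt_id s).sub_const a).log hs').hasDerivWithinAt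
  · have hs' : b - a ≤ s - a := sub_le_sub_right hs a
    rw [← NNReal.coe_le_coe, coe_nnnorm, Real.norm_of_nonneg (inv_nonneg.2 (hb.le.trans hs')),
      Real.coe_toNNReal _ (by positivity)]
    gcongr

theorem summable_primes_rpow_neg {s : ℝ} (hs : 1 < s) :
    Summable fun p : Nat.Primes ↦ ((p : ℕ) : ℝ) ^ (-s) :=
  Nat.Primes.summable_rpow.2 (neg_lt_neg hs)

theorem summable_primes_rpow_neg_mul_log {s : ℝ} (hs : 1 < s) :
    Summable fun p : Nat.Primes ↦ ((p : ℕ) : ℝ) ^ (-s) * Real.log p := by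
  set ε := (s - 1) / 2 with hε_def
  have hε : 0 < ε := by linarith
  refine Summable.of_nonneg_of_le (fun p ↦ by positivity) (fun p ↦ ?_)
    ((summable_primes_rpow_neg (s := s - ε) (by linarith)).div_const ε)
  have hp : (0 : ℝ) < (p : ℕ) := mod_cast p.2.pos
  calc ((p : ℕ) : ℝ) ^ (-s) * Real.log p
      ≤ ((p : ℕ) : ℝ) ^ (-s) * (((p : ℕ) : ℝ) ^ ε / ε) := by
        gcongr; exact Real.log_le_rpow_div hp.le hε
    _ = ((p : ℕ) : ℝ) ^ (-(s - ε)) / ε := by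
        rw [← mul_div_assoc, ← Real.rpow_add hp, neg_sub, sub_eq_neg_add]

theorem summable_primes_neg_log_one_sub_rpow_neg {s : ℝ} (hs : 1 < s) :
    Summable fun p : Nat.Primes ↦ -Real.log (1 - ((p : ℕ) : ℝ) ^ (-s)) := by
  simpa only [sub_eq_add_neg] using
    (Real.summable_log_one_add_of_summable (summable_primes_rpow_neg hs).neg).neg

theorem rpow_neg_mem_Icc_zero_inv {x s : ℝ} (hx : 1 ≤ x) (hs : 1 ≤ s) :
    x ^ (-s) ∈ Set.Icc 0 x⁻¹ := by
  refine ⟨by positivity, ?_⟩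
  rw [← Real.rpow_neg_one]
  exact Real.rpow_le_rpow_of_exponent_le hx (neg_le_neg hs)

theorem one_le_prime_cast (p : Nat.Primes) : (1 : ℝ) ≤ (p : ℕ) :=
  mod_cast p.2.one_le

theorem inv_prime_le_one_half (p : Nat.Primes) : ((p : ℕ) : ℝ)⁻¹ ≤ 1 / 2 := by
  rw [one_div]
  exact inv_anti₀ two_pos (mod_cast p.2.two_le)

/-- The prime zeta function `P(s) = ∑_p p^{-s}` at a real argument; the sum converges for `1 < s`
and takes the junk value `0` otherwise. -/
noncomputable def primeZeta (s : ℝ) : ℝ :=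
  ∑' p : Nat.Primes, ((p : ℕ) : ℝ) ^ (-s)

/-- The contribution `∑_p ∑_{k ≥ 2} p^{-ks}/k` of the proper prime powers to `log ζ(s)`, with the
inner series summed to `-log (1 - p^{-s}) - p^{-s}`. -/
noncomputable def properPrimePowerSum (s : ℝ) : ℝ :=
  ∑' p : Nat.Primes, (-Real.log (1 - ((p : ℕ) : ℝ) ^ (-s)) - ((p : ℕ) : ℝ) ^ (-s))

theorem log_riemannZeta_re_eq_tsum_primes {s : ℝ} (hs : 1 < s) :
    Real.log (riemannZeta s).re =
      ∑' p : Nat.Primes, -Real.log (1 - ((p : ℕ) : ℝ) ^ (-s)) := by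
  have hcast : ((∑' p : Nat.Primes, -Real.log (1 - ((p : ℕ) : ℝ) ^ (-s)) : ℝ) : ℂ) =
      ∑' p : Nat.Primes, -Complex.log (1 - (p : ℂ) ^ (-(s : ℂ))) := by
    rw [Complex.ofReal_tsum]
    refine tsum_congr fun p ↦ ?_
    have hp : 0 ≤ 1 - ((p : ℕ) : ℝ) ^ (-s) := by
      linarith [(rpow_neg_mem_Icc_zero_inv (one_le_prime_cast p) hs.le).2,
        inv_prime_le_one_half p]
    rw [Complex.ofReal_neg, Complex.ofReal_log hp, Complex.ofReal_sub,
      Complex.ofReal_cpow (Nat.cast_nonneg _)]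
    simp only [Complex.ofReal_one, Complex.ofReal_natCast, Complex.ofReal_neg]
  rw [← riemannZeta_eulerProduct_exp_log (s := (s : ℂ)) (by simpa using hs), ← hcast,
    Complex.exp_ofReal_re, Real.log_exp]

theorem log_riemannZeta_re_eq_primeZeta_add {s : ℝ} (hs : 1 < s) :
    Real.log (riemannZeta s).re = primeZeta s + properPrimePowerSum s := by
  rw [log_riemannZeta_re_eq_tsum_primes hs, primeZeta, properPrimePowerSum,
    (summable_primes_neg_log_one_sub_rpow_neg hs).tsum_sub (summable_primes_rpow_neg hs)]
  ring

theorem primeZeta_add_log_sub_one {s : ℝ} (hs : 1 < s) :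
    primeZeta s + Real.log (s - 1) = Real.log (riemannZeta₁ s).re - properPrimePowerSum s := by
  linarith [log_riemannZeta_re_eq_primeZeta_add hs, log_riemannZeta_eq_neg_log_sub_add_ofReal hs]

theorem riemannZeta₁_re_pos {s : ℝ} (hs : 1 ≤ s) : 0 < (riemannZeta₁ s).re := by
  rcases hs.eq_or_lt with rfl | hs
  · simp
  have hmul : (riemannZeta s).re = (s - 1)⁻¹ * (riemannZeta₁ s).re := by
    rw_mod_cast [riemannZeta_eq_inv_sub_mul (by simpa using hs.ne'), Complex.re_ofReal_mul]
  exact (pos_iff_pos_of_mul_pos (hmul ▸ riemannZeta_re_pos_of_one_lt hs)).1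
    (inv_pos.2 (sub_pos.2 hs))

theorem exists_lipschitzOnWith_log_riemannZeta₁_re (b : ℝ) :
    ∃ K, LipschitzOnWith K (fun s : ℝ ↦ Real.log (riemannZeta₁ s).re) (Set.Icc 1 b) := by
  have hcomplex : ContDiff ℝ 1 riemannZeta₁ :=
    (differentiable_riemannZeta₁.contDiff (n := 1)).restrict_scalars ℝ
  have hreal : ContDiff ℝ 1 fun s : ℝ ↦ (riemannZeta₁ s).re :=
    Complex.reCLM.contDiff.comp (hcomplex.comp Complex.ofRealCLM.contDiff)
  have hlog : ContDiffOn ℝ 1 (fun s : ℝ ↦ Real.log (riemannZeta₁ s).re) (Set.Icc 1 b) :=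
    hreal.contDiffOn.log fun s hs ↦ (riemannZeta₁_re_pos hs.1).ne'
  exact hlog.exists_lipschitzOnWith one_ne_zero (convex_Icc 1 b) isCompact_Icc

theorem exists_lipschitzOnWith_primeZeta {σ : ℝ} (hσ : 1 < σ) :
    ∃ K, LipschitzOnWith K primeZeta (Set.Ici σ) :=
  ⟨_, lipschitzOnWith_tsum (summable_primes_rpow_neg_mul_log hσ).toNNReal
    (fun p ↦ lipschitzOnWith_rpow_neg (one_le_prime_cast p) σ)
    fun _ hs ↦ summable_primes_rpow_neg (hσ.trans_le hs)⟩

theorem exists_lipschitzOnWith_properPrimePowerSum :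
    ∃ K, LipschitzOnWith K properPrimePowerSum (Set.Ioi 1) := by
  have hsum := ((summable_primes_rpow_neg_mul_log one_lt_two).mul_left 2).toNNReal
  refine ⟨_, lipschitzOnWith_tsum hsum (fun p ↦ ?_) fun s hs ↦
    (summable_primes_neg_log_one_sub_rpow_neg hs).sub (summable_primes_rpow_neg hs)⟩
  have hp := one_le_prime_cast p
  have hp' := inv_prime_le_one_half p
  have hmaps : Set.MapsTo (fun s : ℝ ↦ ((p : ℕ) : ℝ) ^ (-s)) (Set.Ici 1)
      (Set.Icc 0 ((p : ℕ) : ℝ)⁻¹) := fun s hs ↦ rpow_neg_mem_Icc_zero_inv hp hs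
  have hcomp := ((lipschitzOnWith_neg_log_one_sub_sub_self (by linarith)).comp
    (lipschitzOnWith_rpow_neg hp 1) hmaps).mono Set.Ioi_subset_Ici_self
  refine hcomp.weaken ?_
  rw [← Real.toNNReal_mul (div_nonneg (by positivity) (by linarith))]
  refine Real.toNNReal_le_toNNReal ?_
  calc ((p : ℕ) : ℝ)⁻¹ / (1 - ((p : ℕ) : ℝ)⁻¹) * (((p : ℕ) : ℝ) ^ (-1 : ℝ) * Real.log p)
      ≤ ((p : ℕ) : ℝ)⁻¹ / (1 / 2) * (((p : ℕ) : ℝ) ^ (-1 : ℝ) * Real.log p) := by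
        gcongr
        linarith
    _ = 2 * (((p : ℕ) : ℝ) ^ (-2 : ℝ) * Real.log p) := by
        rw [Real.rpow_neg_one, Real.rpow_neg (by positivity), Real.rpow_two]
        field_simp

theorem exists_lipschitzOnWith_primeZeta_add_log_sub_one :
    ∃ K, LipschitzOnWith K (fun s ↦ primeZeta s + Real.log (s - 1)) (Set.Ioi 1) := by
  obtain ⟨K₁, hζ₁⟩ := exists_lipschitzOnWith_log_riemannZeta₁_re 2
  obtain ⟨K₂, hpow⟩ := exists_lipschitzOnWith_properPrimePowerSum
  obtain ⟨K₃, hP⟩ := exists_lipschitzOnWith_primeZeta one_lt_two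
  have hnear : LipschitzOnWith (K₁ + K₂) (fun s ↦ primeZeta s + Real.log (s - 1))
      (Set.Ioi 1 ∩ Set.Iic 2) :=
    fun s hs t ht ↦ by
      simpa only [primeZeta_add_log_sub_one hs.1, primeZeta_add_log_sub_one ht.1] using
        ((hζ₁.mono fun _ hu ↦ ⟨hu.1.le, hu.2⟩).sub (hpow.mono Set.inter_subset_left)) hs ht
  have hfar := (hP.add (lipschitzOnWith_log_sub one_lt_two)).mono
    (Set.inter_subset_right (s := Set.Ioi 1))
  exact ⟨_, lipschitzOnWith_of_inter_Iic_of_inter_Ici (by norm_num) hnear hfar⟩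

theorem tsum_primes_rpow_sub_mul_rpow_sub {a b c d : ℝ} (hac : 0 < a + c) (had : 0 < a + d)
    (hbc : 0 < b + c) (hbd : 0 < b + d) :
    ∑' p : Nat.Primes,
        (((p : ℕ) : ℝ) ^ (-(1 / 2 : ℝ) - a) - ((p : ℕ) : ℝ) ^ (-(1 / 2 : ℝ) - b)) *
        (((p : ℕ) : ℝ) ^ (-(1 / 2 : ℝ) - c) - ((p : ℕ) : ℝ) ^ (-(1 / 2 : ℝ) - d)) =
      (primeZeta (1 + (a + c)) - primeZeta (1 + (b + c))) -
        (primeZeta (1 + (a + d)) - primeZeta (1 + (b + d))) := by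
  have sac := summable_primes_rpow_neg (lt_add_of_pos_right 1 hac)
  have sad := summable_primes_rpow_neg (lt_add_of_pos_right 1 had)
  have sbc := summable_primes_rpow_neg (lt_add_of_pos_right 1 hbc)
  have sbd := summable_primes_rpow_neg (lt_add_of_pos_right 1 hbd)
  simp only [primeZeta]
  rw [← sac.tsum_sub sbc, ← sad.tsum_sub sbd, ← (sac.sub sbc).tsum_sub (sad.sub sbd)]
  refine tsum_congr fun p ↦ ?_
  have hp : (0 : ℝ) < (p : ℕ) := mod_cast p.2.pos
  have hsplit (x y : ℝ) : ((p : ℕ) : ℝ) ^ (-(1 + (x + y))) =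
      ((p : ℕ) : ℝ) ^ (-(1 / 2 : ℝ) - x) * ((p : ℕ) : ℝ) ^ (-(1 / 2 : ℝ) - y) := by
    rw [← Real.rpow_add hp]
    ring_nf
  simp only [hsplit]
  ring

theorem covariance_asymptotic_general :
    ∃ C : ℝ, 0 < C ∧ ∀ t₁ t₂ : ℝ, 0 < t₁ → 0 < t₂ →
      |(∑' p : Nat.Primes,
          (((p : ℕ) : ℝ) ^ (-(1 / 2 : ℝ) - t₁) - ((p : ℕ) : ℝ) ^ (-(1 / 2 : ℝ) - 2 * t₁)) *
          (((p : ℕ) : ℝ) ^ (-(1 / 2 : ℝ) - t₂) - ((p : ℕ) : ℝ) ^ (-(1 / 2 : ℝ) - 2 * t₂))) -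
        (Real.log ((t₁ + 2 * t₂) / (t₁ + t₂)) + Real.log ((2 * t₁ + t₂) / (2 * t₁ + 2 * t₂)))|
        ≤ C * t₁ := by
  obtain ⟨K, hK⟩ := exists_lipschitzOnWith_primeZeta_add_log_sub_one
  refine ⟨2 * K + 1, by positivity, fun t₁ t₂ h₁ h₂ ↦ ?_⟩
  have hshift (u : ℝ) (hu : 0 < u) :
      |(primeZeta (1 + (t₁ + u)) + Real.log (t₁ + u)) -
        (primeZeta (1 + (2 * t₁ + u)) + Real.log (2 * t₁ + u))| ≤ K * t₁ := by
    have hdist : dist (1 + (t₁ + u)) (1 + (2 * t₁ + u)) = t₁ := by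
      rw [dist_comm, Real.dist_eq, abs_of_nonneg] <;> linarith
    simpa only [hdist, Real.dist_eq, add_sub_cancel_left] using
      hK.dist_le_mul _ (lt_add_of_pos_right 1 (by positivity : 0 < t₁ + u)) _
        (lt_add_of_pos_right 1 (by positivity : 0 < 2 * t₁ + u))
  rw [tsum_primes_rpow_sub_mul_rpow_sub (by positivity) (by positivity) (by positivity)
    (by positivity), Real.log_div (by positivity) (by positivity),
    Real.log_div (by positivity) (by positivity), abs_le]
  obtain ⟨hlow, hupp⟩ := abs_le.1 (hshift t₂ h₂)
  obtain ⟨hlow', hupp'⟩ := abs_le.1 (hshift (2 * t₂) (by positivity))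
  constructor <;> linarith

/-- There is a constant `C > 0` such that for all `0 < t₂ < t₁ ≤ 1/4`,
`|∑_p (p^{-1/2-t₁} - p^{-1/2-2t₁})(p^{-1/2-t₂} - p^{-1/2-2t₂})
  - (log((t₁+2t₂)/(t₁+t₂)) + log((2t₁+t₂)/(2t₁+2t₂)))| ≤ C t₁`. -/
theorem covariance_asymptotic :
    ∃ C : ℝ, 0 < C ∧ ∀ t₁ t₂ : ℝ, 0 < t₂ → t₂ < t₁ → t₁ ≤ 1 / 4 →
      |(∑' p : Nat.Primes,
          (((p : ℕ) : ℝ) ^ (-(1 / 2 : ℝ) - t₁) - ((p : ℕ) : ℝ) ^ (-(1 / 2 : ℝ) - 2 * t₁)) *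
          (((p : ℕ) : ℝ) ^ (-(1 / 2 : ℝ) - t₂) - ((p : ℕ) : ℝ) ^ (-(1 / 2 : ℝ) - 2 * t₂))) -
        (Real.log ((t₁ + 2 * t₂) / (t₁ + t₂)) + Real.log ((2 * t₁ + t₂) / (2 * t₁ + 2 * t₂)))|
        ≤ C * t₁ :=
  let ⟨C, hC, h⟩ := covariance_asymptotic_general
  ⟨C, hC, fun t₁ t₂ ht₂ ht₂₁ _ ↦ h t₁ t₂ (ht₂.trans ht₂₁) ht₂⟩
end

section
/- Let (t_i) and (s_i) be sequences of positive reals with s_i < t_i for all i, t_i → 0, and s_i / t_i → 0 as i → ∞. Then ∑_p (p^{-1/2-t_i} − p^{-1/2-2t_i})(p^{-1/2-s_i} − p^{-1/2-2s_i}) → 0 as i → ∞, where the sum runs over all primes. -/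
open Filter Topology

/-!
For `x ≥ 1` the gap `x^(-1/2-s) - x^(-1/2-2s)` is at most `s log x · x^(-1/2-s)`, so the sum is at
most `s ∑_p (log p) p^(-1-(t+s))`. By Chebyshev's bound the weights `log p` have partial sums at
most those of a constant sequence on `n ≥ 2`, so summation by parts compares this prime sum with
`∑_{n ≥ 2} n^(-1-(t+s)) ≤ 1 / (t + s)`. Altogether the sum is `O(s / (t + s))`, uniformly in `t`
and `s`.
-/

open Chebyshev Finset Real

section SummationByParts

variable {R : Type*} [Ring R] [PartialOrder R] [IsOrderedRing R]

theorem sum_range_mul_le_sum_range_mul_of_antitone {f h g : ℕ → R} (hg : Antitone g)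
    (hg₀ : ∀ n, 0 ≤ g n) (hfh : ∀ n, ∑ i ∈ range n, f i ≤ ∑ i ∈ range n, h i) (n : ℕ) :
    ∑ i ∈ range n, f i * g i ≤ ∑ i ∈ range n, h i * g i := by
  have partialSum_nonneg (n : ℕ) : 0 ≤ ∑ i ∈ range n, (h i - f i) := by
    rw [sum_sub_distrib]
    exact sub_nonneg.2 (hfh n)
  have partialSum_mul_le (n : ℕ) :
      (∑ i ∈ range n, (h i - f i)) * g n ≤ ∑ i ∈ range n, (h i - f i) * g i := by
    induction n with
    | zero => simp
    | succ n ih =>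
      calc (∑ i ∈ range (n + 1), (h i - f i)) * g (n + 1)
          ≤ (∑ i ∈ range (n + 1), (h i - f i)) * g n :=
            mul_le_mul_of_nonneg_left (hg n.le_succ) (partialSum_nonneg _)
        _ = (∑ i ∈ range n, (h i - f i)) * g n + (h n - f n) * g n := by
            rw [sum_range_succ, add_mul]
        _ ≤ ∑ i ∈ range (n + 1), (h i - f i) * g i := by
            rw [sum_range_succ]
            gcongr
  have difference_nonneg : 0 ≤ ∑ i ∈ range n, (h i - f i) * g i :=
    (mul_nonneg (partialSum_nonneg n) (hg₀ n)).trans (partialSum_mul_le n)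
  simpa only [sub_mul, sum_sub_distrib, sub_nonneg] using difference_nonneg

end SummationByParts

section Reindexing

variable {G : Type*} [AddCommGroup G] [TopologicalSpace G] [IsTopologicalAddGroup G]

-- Dropping the indices `0` and `1` makes `k ↦ (k + 2)^(-1-t)` antitone on all of `ℕ`; without the
-- shift this would fail because `0^(-1-t) = 0`.
theorem hasSum_primes_iff_hasSum_ite_add_two (f : ℕ → G) {a : G} :
    HasSum (fun p : Nat.Primes ↦ f p) a ↔
      HasSum (fun k ↦ if (k + 2).Prime then f (k + 2) else 0) a := by
  rw [Nat.Primes.hasSum_iff_hasSum_ite, ← hasSum_nat_add_iff' 2]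
  simp [sum_range_succ, Nat.not_prime_zero, Nat.not_prime_one]

theorem summable_primes_iff_summable_ite_add_two (f : ℕ → G) :
    Summable (fun p : Nat.Primes ↦ f p) ↔
      Summable fun k ↦ if (k + 2).Prime then f (k + 2) else 0 :=
  exists_congr fun _ ↦ hasSum_primes_iff_hasSum_ite_add_two f

theorem tsum_primes_eq_tsum_ite_add_two [T2Space G] (f : ℕ → G) :
    ∑' p : Nat.Primes, f p = ∑' k, if (k + 2).Prime then f (k + 2) else 0 :=
  tsum_eq_tsum_of_hasSum_iff_hasSum (hasSum_primes_iff_hasSum_ite_add_two f)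

end Reindexing

section PrimeSums

theorem theta_natCast_add_one_le (n : ℕ) : θ (n + 1) ≤ 2 * log 4 * n := by
  rcases n.eq_zero_or_pos with rfl | hn
  · simp
  have hn₁ : (1 : ℝ) ≤ n := mod_cast hn
  calc θ (n + 1) ≤ log 4 * (n + 1) := theta_le_log4_mul_x (by positivity)
    _ ≤ log 4 * (n + n) := by gcongr
    _ = 2 * log 4 * n := by ring

theorem sum_range_ite_prime_log_add_two (n : ℕ) :
    ∑ k ∈ range n, (if (k + 2).Prime then log ((k + 2 : ℕ) : ℝ) else 0) = θ (n + 1) := by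
  rw [theta_eq_sum_Icc, ← Nat.cast_add_one, Nat.floor_natCast, sum_filter,
    ← Nat.range_succ_eq_Icc_zero, sum_range_succ', sum_range_succ']
  simp [Nat.not_prime_zero, Nat.not_prime_one, add_assoc]

variable {t : ℝ}

theorem sum_range_add_two_rpow_le (ht : 0 < t) (n : ℕ) :
    ∑ k ∈ range n, ((k + 2 : ℕ) : ℝ) ^ (-1 - t) ≤ 1 / t := by
  have antitone_rpow : AntitoneOn (fun x : ℝ ↦ x ^ (-1 - t)) (Set.Ioi 0) :=
    antitoneOn_rpow_Ioi_of_exponent_nonpos (by linarith)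
  have sum_le_integral :
      ∑ k ∈ Ico 1 (1 + n), ((k + 1 : ℕ) : ℝ) ^ (-1 - t) ≤
        ∫ x in Set.Ioi ((1 : ℕ) : ℝ), x ^ (-1 - t) :=
    AntitoneOn.sum_Ico_le_integral
      (antitone_rpow.mono fun x hx ↦ zero_lt_one.trans_le (by simpa using hx.1))
      (integrableOn_Ioi_rpow_of_lt (by linarith) (by simp))
      fun x hx ↦ rpow_nonneg (by simpa using (Nat.cast_nonneg 1).trans hx.le) _
  calc ∑ k ∈ range n, ((k + 2 : ℕ) : ℝ) ^ (-1 - t)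
      = ∑ k ∈ Ico 1 (1 + n), ((k + 1 : ℕ) : ℝ) ^ (-1 - t) := by
        rw [sum_Ico_eq_sum_range, Nat.add_sub_cancel_left]
        exact sum_congr rfl fun k _ ↦ by rw [show k + 2 = 1 + k + 1 by omega]
    _ ≤ ∫ x in Set.Ioi ((1 : ℕ) : ℝ), x ^ (-1 - t) := sum_le_integral
    _ = 1 / t := by
        rw [integral_Ioi_rpow_of_lt (by linarith) (by simp)]
        rw [Nat.cast_one, one_rpow, show -1 - t + 1 = -t by ring, neg_div_neg_eq]

theorem sum_range_ite_prime_log_mul_rpow_le (ht : 0 < t) (n : ℕ) :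
    ∑ k ∈ range n, (if (k + 2).Prime then
      log ((k + 2 : ℕ) : ℝ) * ((k + 2 : ℕ) : ℝ) ^ (-1 - t) else 0) ≤ 2 * log 4 / t := by
  have antitone_rpow : Antitone fun k : ℕ ↦ ((k + 2 : ℕ) : ℝ) ^ (-1 - t) := fun k m hkm ↦
    rpow_le_rpow_of_nonpos (by positivity) (by gcongr) (by linarith)
  calc ∑ k ∈ range n, (if (k + 2).Prime then
        log ((k + 2 : ℕ) : ℝ) * ((k + 2 : ℕ) : ℝ) ^ (-1 - t) else 0)
      = ∑ k ∈ range n, (if (k + 2).Prime then log ((k + 2 : ℕ) : ℝ) else 0) *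
          ((k + 2 : ℕ) : ℝ) ^ (-1 - t) := by simp only [ite_mul, zero_mul]
    _ ≤ ∑ k ∈ range n, 2 * log 4 * ((k + 2 : ℕ) : ℝ) ^ (-1 - t) := by
        refine sum_range_mul_le_sum_range_mul_of_antitone antitone_rpow
          (fun k ↦ by positivity) (fun m ↦ ?_) n
        rw [sum_range_ite_prime_log_add_two, sum_const, card_range, nsmul_eq_mul, mul_comm]
        exact theta_natCast_add_one_le m
    _ ≤ 2 * log 4 * (1 / t) := by
        rw [← mul_sum]
        gcongr
        exact sum_range_add_two_rpow_le ht n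
    _ = 2 * log 4 / t := mul_one_div _ _

theorem ite_prime_log_mul_rpow_nonneg (t : ℝ) (n : ℕ) :
    0 ≤ if n.Prime then log n * (n : ℝ) ^ (-1 - t) else 0 :=
  ite_nonneg (mul_nonneg (log_natCast_nonneg n) (rpow_nonneg n.cast_nonneg _)) le_rfl

theorem summable_primes_log_mul_rpow (ht : 0 < t) :
    Summable fun p : Nat.Primes ↦ log (p : ℕ) * ((p : ℕ) : ℝ) ^ (-1 - t) :=
  (summable_primes_iff_summable_ite_add_two fun n : ℕ ↦ log n * (n : ℝ) ^ (-1 - t)).2 <|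
    summable_of_sum_range_le (fun _ ↦ ite_prime_log_mul_rpow_nonneg t _)
      (sum_range_ite_prime_log_mul_rpow_le ht)

theorem tsum_primes_log_mul_rpow_le (ht : 0 < t) :
    ∑' p : Nat.Primes, log (p : ℕ) * ((p : ℕ) : ℝ) ^ (-1 - t) ≤ 2 * log 4 / t := by
  rw [tsum_primes_eq_tsum_ite_add_two fun n : ℕ ↦ log n * (n : ℝ) ^ (-1 - t)]
  exact Real.tsum_le_of_sum_range_le (fun _ ↦ ite_prime_log_mul_rpow_nonneg t _)
    (sum_range_ite_prime_log_mul_rpow_le ht)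

end PrimeSums

section Gap

theorem rpow_sub_rpow_le_mul_log {x : ℝ} (hx : 0 < x) (a b : ℝ) :
    x ^ a - x ^ b ≤ (a - b) * log x * x ^ a := by
  have h : 1 - (a - b) * log x ≤ x ^ (b - a) := by
    rw [rpow_def_of_pos hx]
    linarith [add_one_le_exp (log x * (b - a))]
  calc x ^ a - x ^ b = x ^ a * (1 - x ^ (b - a)) := by
        rw [mul_sub, mul_one, ← rpow_add hx, add_sub_cancel]
    _ ≤ x ^ a * ((a - b) * log x) := by gcongr; linarith
    _ = (a - b) * log x * x ^ a := mul_comm _ _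

/-- The factor `x^(-1/2-t) - x^(-1/2-2t)` of the covariance series, for real `x` in place of the
prime `p`. -/
noncomputable def rpowGap (t x : ℝ) : ℝ :=
  x ^ (-(1 / 2 : ℝ) - t) - x ^ (-(1 / 2 : ℝ) - 2 * t)

variable {t s x : ℝ}

theorem rpowGap_nonneg (ht : 0 ≤ t) (hx : 1 ≤ x) : 0 ≤ rpowGap t x :=
  sub_nonneg.2 (rpow_le_rpow_of_exponent_le hx (by linarith))

theorem rpowGap_le_rpow (t : ℝ) (hx : 0 ≤ x) : rpowGap t x ≤ x ^ (-(1 / 2 : ℝ) - t) :=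
  sub_le_self _ (rpow_nonneg hx _)

theorem rpowGap_le_mul_log (t : ℝ) (hx : 0 < x) :
    rpowGap t x ≤ t * log x * x ^ (-(1 / 2 : ℝ) - t) := by
  have exponent_gap : -(1 / 2 : ℝ) - t - (-(1 / 2 : ℝ) - 2 * t) = t := by ring
  simpa only [rpowGap, exponent_gap] using
    rpow_sub_rpow_le_mul_log hx (-(1 / 2 : ℝ) - t) (-(1 / 2 : ℝ) - 2 * t)

theorem rpowGap_mul_rpowGap_le (t : ℝ) (hs : 0 ≤ s) (hx : 1 ≤ x) :
    rpowGap t x * rpowGap s x ≤ s * (log x * x ^ (-1 - (t + s))) := by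
  have hx₀ : 0 < x := zero_lt_one.trans_le hx
  calc rpowGap t x * rpowGap s x
      ≤ x ^ (-(1 / 2 : ℝ) - t) * (s * log x * x ^ (-(1 / 2 : ℝ) - s)) :=
        mul_le_mul (rpowGap_le_rpow t hx₀.le) (rpowGap_le_mul_log s hx₀) (rpowGap_nonneg hs hx)
          (by positivity)
    _ = s * (log x * (x ^ (-(1 / 2 : ℝ) - t) * x ^ (-(1 / 2 : ℝ) - s))) := by ring
    _ = s * (log x * x ^ (-1 - (t + s))) := by
        rw [← rpow_add hx₀]
        ring_nf

end Gap

section Covariance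

/-- The covariance sum `∑_p (p^(-1/2-t) - p^(-1/2-2t)) (p^(-1/2-s) - p^(-1/2-2s))` over the primes,
which converges for `t, s > 0`. -/
noncomputable def primeCovariance (t s : ℝ) : ℝ :=
  ∑' p : Nat.Primes, rpowGap t (p : ℕ) * rpowGap s (p : ℕ)

variable {t s : ℝ}

theorem rpowGap_mul_rpowGap_prime_nonneg (ht : 0 ≤ t) (hs : 0 ≤ s) (p : Nat.Primes) :
    0 ≤ rpowGap t (p : ℕ) * rpowGap s (p : ℕ) :=
  have hp : (1 : ℝ) ≤ (p : ℕ) := mod_cast p.2.one_le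
  mul_nonneg (rpowGap_nonneg ht hp) (rpowGap_nonneg hs hp)

theorem primeCovariance_nonneg (ht : 0 ≤ t) (hs : 0 ≤ s) : 0 ≤ primeCovariance t s :=
  tsum_nonneg (rpowGap_mul_rpowGap_prime_nonneg ht hs)

theorem primeCovariance_le (ht : 0 < t) (hs : 0 ≤ s) :
    primeCovariance t s ≤ 2 * log 4 * (s / (t + s)) := by
  have hts : 0 < t + s := add_pos_of_pos_of_nonneg ht hs
  have term_le (p : Nat.Primes) : rpowGap t (p : ℕ) * rpowGap s (p : ℕ) ≤
      s * (log (p : ℕ) * ((p : ℕ) : ℝ) ^ (-1 - (t + s))) :=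
    rpowGap_mul_rpowGap_le t hs (mod_cast p.2.one_le)
  have summable_majorant := (summable_primes_log_mul_rpow hts).mul_left s
  have summable_term := summable_majorant.of_nonneg_of_le
    (rpowGap_mul_rpowGap_prime_nonneg ht.le hs) term_le
  calc primeCovariance t s
      ≤ ∑' p : Nat.Primes, s * (log (p : ℕ) * ((p : ℕ) : ℝ) ^ (-1 - (t + s))) :=
        summable_term.tsum_le_tsum term_le summable_majorant
    _ = s * ∑' p : Nat.Primes, log (p : ℕ) * ((p : ℕ) : ℝ) ^ (-1 - (t + s)) := tsum_mul_left
    _ ≤ s * (2 * log 4 / (t + s)) := by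
        gcongr
        exact tsum_primes_log_mul_rpow_le hts
    _ = 2 * log 4 * (s / (t + s)) := by ring

end Covariance

theorem covariance_tendsto_zero_general {ι : Type*} {l : Filter ι} {t s : ι → ℝ}
    (ht : ∀ i, 0 < t i) (hs : ∀ i, 0 ≤ s i) (hratio : Tendsto (fun i ↦ s i / t i) l (𝓝 0)) :
    Tendsto (fun i ↦ primeCovariance (t i) (s i)) l (𝓝 0) := by
  have le_ratio (i : ι) : primeCovariance (t i) (s i) ≤ 2 * log 4 * (s i / t i) := by
    have : s i / (t i + s i) ≤ s i / t i :=
      div_le_div_of_nonneg_left (hs i) (ht i) (le_add_of_nonneg_right (hs i))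
    exact (primeCovariance_le (ht i) (hs i)).trans (by gcongr)
  exact squeeze_zero (fun i ↦ primeCovariance_nonneg (ht i).le (hs i)) le_ratio
    (by simpa using hratio.const_mul (2 * log 4))

/-- If `0 < s_i < t_i`, `t_i → 0` and `s_i / t_i → 0`, then
`∑_p (p^{-1/2-t_i} - p^{-1/2-2t_i})(p^{-1/2-s_i} - p^{-1/2-2s_i}) → 0`. -/
theorem covariance_tendsto_zero (t s : ℕ → ℝ)
    (hs : ∀ i, 0 < s i) (hst : ∀ i, s i < t i)
    (ht : Tendsto t atTop (𝓝 0))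
    (hratio : Tendsto (fun i => s i / t i) atTop (𝓝 0)) :
    Tendsto (fun i => ∑' p : Nat.Primes,
        (((p : ℕ) : ℝ) ^ (-(1 / 2 : ℝ) - t i) - ((p : ℕ) : ℝ) ^ (-(1 / 2 : ℝ) - 2 * t i)) *
        (((p : ℕ) : ℝ) ^ (-(1 / 2 : ℝ) - s i) - ((p : ℕ) : ℝ) ^ (-(1 / 2 : ℝ) - 2 * s i)))
      atTop (𝓝 0) := by
  exact covariance_tendsto_zero_general (fun i ↦ (hs i).trans (hst i)) (fun i ↦ (hs i).le) hratio
end
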